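/- A trigraph G contains a square-connected homogeneous pair of strong cliques if and only if it contains a deletion-minimal homogeneous pair of strong cliques (equivalently, G is laminar precisely if it contains no deletion-minimal homogeneous pair of strong cliques). -/

import Mathlib

/-- A trigraph on a vertex type `V`: a symmetric adjacency function with values in
`{1, 0, -1}`, zero on the diagonal, such that semiedges form a matching. -/
structure Trigraph (V : Type) where
  θ : V → V → ℤ
  range_mem : ∀ u v, θ u v = 1 ∨ θ u v = 0 ∨ θ u v = -1
  symm : ∀ u v, θ u v = θ v u
  refl_zero : ∀ v, θ v v = 0
  semi_matching : ∀ u v w : V, u ≠ v → u ≠ w → v ≠ w → θ u v = 0 → θ u w ≠ 0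

namespace Trigraph

variable {V V' V'' : Type}

/-- `u` and `v` are strongly adjacent. -/
def StrongAdj (G : Trigraph V) (u v : V) : Prop := G.θ u v = 1

/-- Distinct `u` and `v` are semiadjacent. -/
def SemiAdj (G : Trigraph V) (u v : V) : Prop := u ≠ v ∧ G.θ u v = 0

/-- Distinct `u` and `v` are adjacent. -/
def Adj (G : Trigraph V) (u v : V) : Prop := u ≠ v ∧ (G.θ u v = 1 ∨ G.θ u v = 0)

/-- Distinct `u` and `v` are antiadjacent. -/
def AntiAdj (G : Trigraph V) (u v : V) : Prop := u ≠ v ∧ (G.θ u v = 0 ∨ G.θ u v = -1)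

/-- `u` and `v` are strongly antiadjacent. -/
def StrongAntiAdj (G : Trigraph V) (u v : V) : Prop := G.θ u v = -1

/-- `X` is strongly complete to `Y`. -/
def StronglyComplete (G : Trigraph V) (X Y : Set V) : Prop :=
  ∀ u ∈ X, ∀ v ∈ Y, G.StrongAdj u v

/-- `X` is strongly anticomplete to `Y`. -/
def StronglyAnticomplete (G : Trigraph V) (X Y : Set V) : Prop :=
  ∀ u ∈ X, ∀ v ∈ Y, G.StrongAntiAdj u v

/-- A strong clique: pairwise strongly adjacent vertices. -/
def IsStrongClique (G : Trigraph V) (K : Set V) : Prop := K.Pairwise G.StrongAdj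

/-- A stable set: pairwise antiadjacent vertices. -/
def IsStableSet (G : Trigraph V) (S : Set V) : Prop := S.Pairwise G.AntiAdj

/-- The neighbourhood of a vertex: the set of vertices adjacent to it. -/
def neighborhood (G : Trigraph V) (v : V) : Set V := {u | G.Adj v u}

/-- Claw-free: no vertex has three pairwise antiadjacent vertices in its neighbourhood. -/
def ClawFree (G : Trigraph V) : Prop :=
  ¬ ∃ v a b c : V, G.Adj v a ∧ G.Adj v b ∧ G.Adj v c ∧
    G.AntiAdj a b ∧ G.AntiAdj a c ∧ G.AntiAdj b c

/-- Cobipartite: the vertex set is the union of two strong cliques. -/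
def Cobipartite (G : Trigraph V) : Prop :=
  ∃ K1 K2 : Set V, G.IsStrongClique K1 ∧ G.IsStrongClique K2 ∧ K1 ∪ K2 = Set.univ

/-- Quasi-line: the neighbourhood of every vertex is the union of two strong cliques. -/
def QuasiLine (G : Trigraph V) : Prop :=
  ∀ v : V, ∃ K1 K2 : Set V, G.IsStrongClique K1 ∧ G.IsStrongClique K2 ∧
    G.neighborhood v = K1 ∪ K2

/-- Connected: any two vertices are joined by a sequence of consecutively adjacent vertices. -/
def Connected (G : Trigraph V) : Prop :=
  ∀ u v : V, Relation.ReflTransGen G.Adj u v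

/-- Non-degenerate: quasi-line and not cobipartite, or claw-free with stability number ≥ 3. -/
def NonDegenerate (G : Trigraph V) : Prop :=
  (G.QuasiLine ∧ ¬ G.Cobipartite) ∨
  (G.ClawFree ∧ ∃ S : Set V, G.IsStableSet S ∧ 3 ≤ S.ncard)

/-- A homogeneous set: `|V| > |X| ≥ 2` and every vertex outside `X` is strongly complete
or strongly anticomplete to `X`. -/
def HomogeneousSet (G : Trigraph V) (X : Set V) : Prop :=
  2 ≤ X.ncard ∧ X ≠ Set.univ ∧
  ∀ v ∉ X, G.StronglyComplete {v} X ∨ G.StronglyAnticomplete {v} X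

/-- `v1 v2 v3 v4` is a square: the pairs `v1v3`, `v2v4` are antiadjacent and the other
four pairs are adjacent. -/
def IsSquare (G : Trigraph V) (v1 v2 v3 v4 : V) : Prop :=
  G.AntiAdj v1 v3 ∧ G.AntiAdj v2 v4 ∧
  G.Adj v1 v2 ∧ G.Adj v2 v3 ∧ G.Adj v3 v4 ∧ G.Adj v4 v1

/-- `X` contains a square. -/
def HasSquareIn (G : Trigraph V) (X : Set V) : Prop :=
  ∃ v1 v2 v3 v4 : V, G.IsSquare v1 v2 v3 v4 ∧ ({v1, v2, v3, v4} : Set V) ⊆ X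

/-- Homogeneous pair of strong cliques `(A, B)`. -/
def HPOSC (G : Trigraph V) (A B : Set V) : Prop :=
  A.Nonempty ∧ B.Nonempty ∧ Disjoint A B ∧
  G.IsStrongClique A ∧ G.IsStrongClique B ∧
  ¬ (∃ a b : V, A = {a} ∧ B = {b}) ∧
  ∀ v ∉ A ∪ B,
    (G.StronglyComplete {v} A ∨ G.StronglyAnticomplete {v} A) ∧
    (G.StronglyComplete {v} B ∨ G.StronglyAnticomplete {v} B)

/-- Deletion-minimal homogeneous pair of strong cliques. -/
def DeletionMinimal (G : Trigraph V) (A B : Set V) : Prop :=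
  G.HPOSC A B ∧ G.HasSquareIn (A ∪ B) ∧
  (∀ a ∈ A, ¬ G.StronglyComplete {a} B ∧ ¬ G.StronglyAnticomplete {a} B) ∧
  (∀ b ∈ B, ¬ G.StronglyComplete {b} A ∧ ¬ G.StronglyAnticomplete {b} A)

/-- There is a square contained in `X` intersecting both `S1` and `S2`. -/
def SquareMeets (G : Trigraph V) (X S1 S2 : Set V) : Prop :=
  ∃ v1 v2 v3 v4 : V, G.IsSquare v1 v2 v3 v4 ∧ ({v1, v2, v3, v4} : Set V) ⊆ X ∧
    (({v1, v2, v3, v4} : Set V) ∩ S1).Nonempty ∧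
    (({v1, v2, v3, v4} : Set V) ∩ S2).Nonempty

/-- Square-connected homogeneous pair of strong cliques. -/
def SquareConnected (G : Trigraph V) (A B : Set V) : Prop :=
  G.HPOSC A B ∧
  (∀ A' A'' : Set V, A'.Nonempty → A''.Nonempty → A' ∪ A'' = A → Disjoint A' A'' →
    G.SquareMeets (A ∪ B) A' A'') ∧
  (∀ B' B'' : Set V, B'.Nonempty → B''.Nonempty → B' ∪ B'' = B → Disjoint B' B'' →
    G.SquareMeets (A ∪ B) B' B'')

/-- Inclusion-maximal square-connected homogeneous pair of strong cliques. -/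
def MaxSquareConnected (G : Trigraph V) (A B : Set V) : Prop :=
  G.SquareConnected A B ∧
  ∀ A' B' : Set V, G.SquareConnected A' B' → A ⊆ A' → B ⊆ B' → A' = A ∧ B' = B

/-- Two homogeneous pairs have skew intersection if a part of one intersects both
parts of the other. -/
def SkewIntersection (A1 B1 A2 B2 : Set V) : Prop :=
  ((A1 ∩ A2).Nonempty ∧ (A1 ∩ B2).Nonempty) ∨
  ((B1 ∩ A2).Nonempty ∧ (B1 ∩ B2).Nonempty) ∨
  ((A2 ∩ A1).Nonempty ∧ (A2 ∩ B1).Nonempty) ∨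
  ((B2 ∩ A1).Nonempty ∧ (B2 ∩ B1).Nonempty)

/-- Laminar: contains no square-connected homogeneous pair of strong cliques. -/
def Laminar (G : Trigraph V) : Prop := ¬ ∃ A B : Set V, G.SquareConnected A B

/-- `G` is a thickening of `G'` via the map `I` (equivalently, `G'` is an antithickening
of `G`): the `I v` are nonempty strong cliques partitioning `V(G)` respecting adjacency. -/
def IsThickening (G : Trigraph V) (G' : Trigraph V') (I : V' → Set V) : Prop :=
  (∀ v : V', (I v).Nonempty ∧ G.IsStrongClique (I v)) ∧
  (∀ u v : V', u ≠ v → Disjoint (I u) (I v)) ∧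
  (⋃ v : V', I v) = Set.univ ∧
  ∀ u v : V', u ≠ v →
    (G'.StrongAdj u v → G.StronglyComplete (I u) (I v)) ∧
    (G'.StrongAntiAdj u v → G.StronglyAnticomplete (I u) (I v)) ∧
    (G'.SemiAdj u v →
      ¬ G.StronglyComplete (I u) (I v) ∧ ¬ G.StronglyAnticomplete (I u) (I v))

/-- `G'` (with thickening map `I`) is an optimal antithickening of `G`: it is a laminar
antithickening with the maximum possible number of vertices. -/
def OptimalAntithickening (G : Trigraph V) (G' : Trigraph V') (I : V' → Set V) : Prop :=
  G.IsThickening G' I ∧ G'.Laminar ∧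
  ∀ (W : Type) (H : Trigraph W) (J : W → Set V),
    G.IsThickening H J → H.Laminar → Nat.card W ≤ Nat.card V'

/-- Isomorphism of trigraphs. -/
def Isomorphic (G1 : Trigraph V) (G2 : Trigraph V') : Prop :=
  ∃ f : V ≃ V', ∀ u v : V, G2.θ (f u) (f v) = G1.θ u v

end Trigraph

namespace Trigraph

/-- A square of two disjoint cliques in normal form. -/
def NSq {V : Type} (G : Trigraph V) (A B : Set V) (a1 a2 b1 b2 : V) : Prop :=
  a1 ∈ A ∧ a2 ∈ A ∧ b1 ∈ B ∧ b2 ∈ B ∧ a1 ≠ a2 ∧ b1 ≠ b2 ∧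
  G.θ a1 b1 ≠ -1 ∧ G.θ a2 b2 ≠ -1 ∧ G.θ a1 b2 ≠ 1 ∧ G.θ a2 b1 ≠ 1

theorem NSq.swap {V : Type} {G : Trigraph V} {A B : Set V} {a1 a2 b1 b2 : V}
    (h : G.NSq A B a1 a2 b1 b2) : G.NSq A B a2 a1 b2 b1 := by
  unfold NSq at *; grind

theorem IsSquare.exists_nsq {V : Type} {G : Trigraph V} {A B : Set V}
    (h : G.HPOSC A B) {v1 v2 v3 v4 : V} (hs : G.IsSquare v1 v2 v3 v4)
    (hsub : ({v1, v2, v3, v4} : Set V) ⊆ A ∪ B) :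
    ∃ a1 a2 b1 b2, G.NSq A B a1 a2 b1 b2 ∧
      ({v1, v2, v3, v4} : Set V) = {a1, a2, b1, b2} := by
  obtain ⟨-, -, hd, hA, hB, -, -⟩ := h
  obtain ⟨⟨n13, t13⟩, ⟨n24, t24⟩, ⟨n12, t12⟩, ⟨n23, t23⟩, ⟨n34, t34⟩, ⟨n41, t41⟩⟩ := hs
  have m1 : v1 ∈ A ∪ B := hsub (by simp)
  have m2 : v2 ∈ A ∪ B := hsub (by simp)
  have m3 : v3 ∈ A ∪ B := hsub (by simp)
  have m4 : v4 ∈ A ∪ B := hsub (by simp)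
  have cA : ∀ x ∈ A, ∀ y ∈ A, x ≠ y → G.θ x y = 1 := fun x hx y hy hn => hA hx hy hn
  have cB : ∀ x ∈ B, ∀ y ∈ B, x ≠ y → G.θ x y = 1 := fun x hx y hy hn => hB hx hy hn
  have e1 := G.symm v1 v2
  have e2 := G.symm v2 v3
  have e3 := G.symm v3 v4
  have e4 := G.symm v4 v1
  have e5 := G.symm v1 v3
  have e6 := G.symm v2 v4
  have aA : ∀ x y, x ≠ y → (G.θ x y = 0 ∨ G.θ x y = -1) → x ∈ A ∪ B → y ∈ A ∪ B →
      (x ∈ A ∧ y ∈ B) ∨ (y ∈ A ∧ x ∈ B) := by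
    intro x y hxy ht hx hy
    rcases hx with hx | hx <;> rcases hy with hy | hy
    · have := cA x hx y hy hxy
      omega
    · exact Or.inl ⟨hx, hy⟩
    · exact Or.inr ⟨hy, hx⟩
    · have := cB x hx y hy hxy
      omega
  have k1 := aA v1 v3 n13 t13 m1 m3
  have k2 := aA v2 v4 n24 t24 m2 m4
  clear aA cA cB hA hB hd hsub m1 m2 m3 m4
  rcases k1 with ⟨p, q⟩ | ⟨p, q⟩ <;> rcases k2 with ⟨r, s⟩ | ⟨r, s⟩
  · refine ⟨v1, v2, v4, v3, ⟨p, r, s, q, n12, n34.symm, ?_, ?_, ?_, ?_⟩, ?_⟩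
    · omega
    · omega
    · omega
    · omega
    · rw [Set.pair_comm v3 v4]
  · refine ⟨v1, v4, v2, v3, ⟨p, r, s, q, n41.symm, n23, ?_, ?_, ?_, ?_⟩, ?_⟩
    · omega
    · omega
    · omega
    · omega
    · rw [Set.pair_comm v3 v4, Set.insert_comm v2 v4]
  · refine ⟨v3, v2, v4, v1, ⟨p, r, s, q, n23.symm, n41, ?_, ?_, ?_, ?_⟩, ?_⟩
    · omega
    · omega
    · omega
    · omega
    · rw [Set.insert_comm v2 v3, Set.insert_comm v1 v3, Set.insert_comm v1 v2,
        Set.pair_comm v1 v4]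
  · refine ⟨v3, v4, v2, v1, ⟨p, r, s, q, n34, n12.symm, ?_, ?_, ?_, ?_⟩, ?_⟩
    · omega
    · omega
    · omega
    · omega
    · rw [Set.insert_comm v2 v3, Set.insert_comm v1 v3, Set.pair_comm v2 v4,
        Set.insert_comm v1 v4, Set.pair_comm v1 v2]

theorem NSq.isSquare {V : Type} {G : Trigraph V} {A B : Set V}
    (hd : Disjoint A B) (hA : G.IsStrongClique A) (hB : G.IsStrongClique B)
    {a1 a2 b1 b2 : V} (hs : G.NSq A B a1 a2 b1 b2) : G.IsSquare a1 a2 b2 b1 := by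
  obtain ⟨p, q, r, s, na, nb, t1, t2, t3, t4⟩ := hs
  have cA : G.θ a1 a2 = 1 := hA p q na
  have cB : G.θ b2 b1 = 1 := hB s r nb.symm
  have hne : ∀ x ∈ A, ∀ y ∈ B, x ≠ y := fun x hx y hy => hd.ne_of_mem hx hy
  have e1 := G.symm a1 b1
  have r1 := G.range_mem a1 b1
  have r2 := G.range_mem a2 b2
  have r3 := G.range_mem a1 b2
  have r4 := G.range_mem a2 b1
  refine ⟨⟨hne _ p _ s, ?_⟩, ⟨hne _ q _ r, ?_⟩, ⟨na, ?_⟩, ⟨hne _ q _ s, ?_⟩,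
    ⟨nb.symm, ?_⟩, ⟨(hne _ p _ r).symm, ?_⟩⟩ <;> omega

theorem HPOSC.swap {V : Type} {G : Trigraph V} {A B : Set V} (h : G.HPOSC A B) :
    G.HPOSC B A := by
  obtain ⟨h1, h2, h3, h4, h5, h6, h7⟩ := h
  refine ⟨h2, h1, h3.symm, h5, h4, ?_, ?_⟩
  · rintro ⟨a, b, ha, hb⟩; exact h6 ⟨b, a, hb, ha⟩
  · intro v hv
    rw [Set.union_comm] at hv
    exact (h7 v hv).symm

theorem connected_of_minimal {V : Type} [Fintype V] {G : Trigraph V} {A B : Set V}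
    (h : G.HPOSC A B) (hsq : G.HasSquareIn (A ∪ B))
    (hmin : ∀ A1 B1 : Set V, G.HPOSC A1 B1 → G.HasSquareIn (A1 ∪ B1) →
      (A ∪ B).ncard ≤ (A1 ∪ B1).ncard) :
    ∀ A' A'' : Set V, A'.Nonempty → A''.Nonempty → A' ∪ A'' = A → Disjoint A' A'' →
      G.SquareMeets (A ∪ B) A' A'' := by
  obtain ⟨v1, v2, v3, v4, hs, hsub⟩ := hsq
  obtain ⟨a1, a2, b1, b2, hn, -⟩ := hs.exists_nsq h hsub
  have hH := h
  obtain ⟨-, -, hd, hA, hB, -, hout⟩ := h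
  let R : V → V → Prop := fun x y => ∃ b1 b2, G.NSq A B x y b1 b2
  let A1 : Set V := {x | Relation.ReflTransGen R a1 x}
  have ha1 : a1 ∈ A1 := Relation.ReflTransGen.refl
  have hA1A : A1 ⊆ A := by
    intro x hx
    induction hx with
    | refl => exact hn.1
    | tail _ hr _ => obtain ⟨_, _, hq⟩ := hr; exact hq.2.1
  let B1 : Set V := {b | b ∈ B ∧ (∃ a ∈ A1, G.θ a b ≠ 1) ∧ (∃ a ∈ A1, G.θ a b ≠ -1)}
  have hB1B : B1 ⊆ B := fun b hb => hb.1
  have step : ∀ x ∈ A1, ∀ y c d, G.NSq A B x y c d → G.NSq A1 B1 x y c d := by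
    intro x hx y c d hq
    have hy : y ∈ A1 := Relation.ReflTransGen.tail hx ⟨c, d, hq⟩
    obtain ⟨p, q, r, s, na, nb, t1, t2, t3, t4⟩ := hq
    exact ⟨hx, hy, ⟨r, ⟨y, hy, t4⟩, ⟨x, hx, t1⟩⟩, ⟨s, ⟨x, hx, t3⟩, ⟨y, hy, t2⟩⟩,
      na, nb, t1, t2, t3, t4⟩
  have hn1 := step a1 ha1 a2 b1 b2 hn
  have hA1c : G.IsStrongClique A1 := hA.mono hA1A
  have hB1c : G.IsStrongClique B1 := hB.mono hB1B
  have hd1 : Disjoint A1 B1 := hd.mono hA1A hB1B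
  -- vertices of `A` outside `A1` are homogeneous to `B1`
  have key : ∀ c ∈ A, c ∉ A1 → G.StronglyComplete {c} B1 ∨ G.StronglyAnticomplete {c} B1 := by
    intro c hc hcn
    have dich : ∀ a ∈ A1, (∀ b ∈ B, G.θ a b ≠ 1 → G.θ c b = -1) ∨
        (∀ b ∈ B, G.θ a b ≠ -1 → G.θ c b = 1) := by
      intro a ha
      by_contra hcon
      push Not at hcon
      obtain ⟨⟨b, hb, t1, t2⟩, ⟨b', hb', t3, t4⟩⟩ := hcon
      have hac : a ≠ c := fun e => hcn (e ▸ ha)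
      have hbb : b' ≠ b := by
        rintro rfl
        have r1 := G.range_mem a b'
        have r2 := G.range_mem c b'
        have e1 := G.symm a b'
        have e2 := G.symm c b'
        exact G.semi_matching b' a c (hd.ne_of_mem (hA1A ha) hb).symm
          (hd.ne_of_mem hc hb).symm hac (by omega) (by omega)
      exact hcn (Relation.ReflTransGen.tail ha
        ⟨b', b, hA1A ha, hc, hb', hb, hac, hbb, t3, t2, t1, t4⟩)
    rcases dich a1 ha1 with h0 | h0
    · right
      have all : ∀ a, Relation.ReflTransGen R a1 a → ∀ b ∈ B, G.θ a b ≠ 1 → G.θ c b = -1 := by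
        intro a ha
        induction ha with
        | refl => exact h0
        | @tail x y hx hr ih =>
          rcases dich y (Relation.ReflTransGen.tail hx hr) with h1 | h1
          · exact h1
          · obtain ⟨c', d', p, q, r, s, na, nb, t1, t2, t3, t4⟩ := hr
            have u1 := ih d' s t3
            have u2 := h1 d' s t2
            omega
      rintro _ rfl b ⟨hb, ⟨a, ha, t⟩, -⟩
      exact all a ha b hb t
    · left
      have all : ∀ a, Relation.ReflTransGen R a1 a → ∀ b ∈ B, G.θ a b ≠ -1 → G.θ c b = 1 := by
        intro a ha
        induction ha with
        | refl => exact h0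
        | @tail x y hx hr ih =>
          rcases dich y (Relation.ReflTransGen.tail hx hr) with h1 | h1
          · obtain ⟨c', d', p, q, r, s, na, nb, t1, t2, t3, t4⟩ := hr
            have u1 := ih c' r t1
            have u2 := h1 c' r t4
            omega
          · exact h1
      rintro _ rfl b ⟨hb, -, ⟨a, ha, t⟩⟩
      exact all a ha b hb t
  have hH1 : G.HPOSC A1 B1 := by
    refine ⟨⟨a1, ha1⟩, ⟨b1, hn1.2.2.1⟩, hd1, hA1c, hB1c, ?_, ?_⟩
    · rintro ⟨a, b, ha, -⟩
      have e1 : a1 ∈ ({a} : Set V) := ha ▸ ha1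
      have e2 : a2 ∈ ({a} : Set V) := ha ▸ hn1.2.1
      exact hn1.2.2.2.2.1 (e1.trans e2.symm)
    · intro v hv
      have hv1 : v ∉ A1 := fun e => hv (Or.inl e)
      have hv2 : v ∉ B1 := fun e => hv (Or.inr e)
      by_cases hvA : v ∈ A
      · refine ⟨Or.inl ?_, key v hvA hv1⟩
        rintro _ rfl x hx
        exact hA hvA (hA1A hx) (fun e => hv1 (e ▸ hx))
      by_cases hvB : v ∈ B
      · refine ⟨?_, Or.inl ?_⟩
        · by_contra hcon
          rw [not_or] at hcon
          apply hv2
          refine ⟨hvB, ?_, ?_⟩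
          · by_contra h'
            push Not at h'
            apply hcon.1
            rintro _ rfl x hx
            exact (G.symm _ _).trans (h' x hx)
          · by_contra h'
            push Not at h'
            apply hcon.2
            rintro _ rfl x hx
            exact (G.symm _ _).trans (h' x hx)
        · rintro _ rfl x hx
          exact hB hvB (hB1B hx) (fun e => hv2 (e ▸ hx))
      · have := hout v (by rintro (e | e) <;> contradiction)
        refine ⟨this.1.imp ?_ ?_, this.2.imp ?_ ?_⟩
        · exact fun h u hu x hx => h u hu x (hA1A hx)
        · exact fun h u hu x hx => h u hu x (hA1A hx)
        · exact fun h u hu x hx => h u hu x (hB1B hx)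
        · exact fun h u hu x hx => h u hu x (hB1B hx)
  have hS1 : G.HasSquareIn (A1 ∪ B1) := by
    refine ⟨a1, a2, b2, b1, hn1.isSquare hd1 hA1c hB1c, ?_⟩
    obtain ⟨p, q, r, s, -⟩ := hn1
    rintro x (rfl | rfl | rfl | rfl)
    exacts [Or.inl p, Or.inl q, Or.inr s, Or.inr r]
  have heq : A1 ∪ B1 = A ∪ B :=
    Set.eq_of_subset_of_ncard_le (Set.union_subset_union hA1A hB1B) (hmin A1 B1 hH1 hS1)
      (Set.toFinite _)
  have hAA1 : ∀ x ∈ A, x ∈ A1 := by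
    intro x hx
    have : x ∈ A1 ∪ B1 := heq ▸ Or.inl hx
    rcases this with e | e
    · exact e
    · exact absurd rfl (hd.ne_of_mem hx (hB1B e))
  -- conclude
  intro A' A'' hne' hne'' hU hD
  have cross : ∀ S T : Set V, S ∪ T = A → a1 ∈ S → T.Nonempty → Disjoint S T →
      ∃ x y, x ∈ S ∧ y ∈ T ∧ R x y := by
    intro S T hU ha hT hD
    by_contra hcon
    push Not at hcon
    have all : ∀ a, Relation.ReflTransGen R a1 a → a ∈ S := by
      intro a ha
      induction ha with
      | refl => assumption
      | @tail x y hx hr ih =>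
        have hy : y ∈ S ∪ T := by
          rw [hU]; obtain ⟨_, _, hq⟩ := hr; exact hq.2.1
        rcases hy with hy | hy
        · exact hy
        · exact absurd hr (hcon x y ih hy)
    obtain ⟨t, ht⟩ := hT
    have : t ∈ A := hU ▸ Or.inr ht
    exact hD.ne_of_mem (all t (hAA1 t this)) ht rfl
  have ha1A : a1 ∈ A' ∪ A'' := hU ▸ hn.1
  have hxy : ∃ x y, x ∈ A' ∧ y ∈ A'' ∧ R x y := by
    rcases ha1A with e | e
    · exact cross A' A'' hU e hne'' hD
    · obtain ⟨x, y, hx, hy, c, d, hq⟩ := cross A'' A' (by rw [Set.union_comm, hU]) e hne' hD.symm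
      exact ⟨y, x, hy, hx, d, c, hq.swap⟩
  obtain ⟨x, y, hx, hy, c, d, hq⟩ := hxy
  refine ⟨x, y, d, c, hq.isSquare hd hA hB, ?_, ⟨x, by simp, hx⟩, ⟨y, by simp, hy⟩⟩
  obtain ⟨p, q, r, s, -⟩ := hq
  rintro z (rfl | rfl | rfl | rfl)
  exacts [Or.inl p, Or.inl q, Or.inr s, Or.inr r]

theorem two_of_meets {V : Type} {G : Trigraph V} {A B : Set V} (h : G.HPOSC A B)
    (hA : ∀ A' A'' : Set V, A'.Nonempty → A''.Nonempty → A' ∪ A'' = A → Disjoint A' A'' →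
      G.SquareMeets (A ∪ B) A' A'') (hnt : A.Nontrivial) :
    ∀ a ∈ A, ∃ a2 b1 b2, G.NSq A B a a2 b1 b2 := by
  intro a ha
  obtain ⟨a', ha', hne⟩ := hnt.exists_ne a
  obtain ⟨v1, v2, v3, v4, hs, hsub, ⟨x, hx, rfl⟩, -⟩ :=
    hA {a} (A \ {a}) ⟨a, rfl⟩ ⟨a', ha', hne⟩
      (by rw [Set.union_sdiff_self]; exact Set.union_eq_right.2 (by simpa using ha))
      Set.disjoint_sdiff_right
  obtain ⟨a1, a2, b1, b2, hn, he⟩ := hs.exists_nsq h hsub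
  rw [he] at hx
  have hd : ∀ y ∈ B, x ≠ y := fun y hy => h.2.2.1.ne_of_mem ha hy
  rcases hx with rfl | rfl | rfl | rfl
  · exact ⟨_, _, _, hn⟩
  · exact ⟨_, _, _, hn.swap⟩
  · exact absurd rfl (hd _ hn.2.2.1)
  · exact absurd rfl (hd _ hn.2.2.2.1)

theorem NSq.not_homog {V : Type} {G : Trigraph V} {A B : Set V} {a1 a2 b1 b2 : V}
    (hn : G.NSq A B a1 a2 b1 b2) :
    ¬ G.StronglyComplete {a1} B ∧ ¬ G.StronglyAnticomplete {a1} B := by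
  obtain ⟨p, q, r, s, na, nb, t1, t2, t3, t4⟩ := hn
  exact ⟨fun h => t3 (h _ rfl _ s), fun h => t1 (h _ rfl _ r)⟩

theorem NSq.transpose {V : Type} {G : Trigraph V} {A B : Set V} {a1 a2 b1 b2 : V}
    (hn : G.NSq A B a1 a2 b1 b2) : G.NSq B A b1 b2 a1 a2 := by
  obtain ⟨p, q, r, s, na, nb, t1, t2, t3, t4⟩ := hn
  refine ⟨r, s, p, q, nb, na, ?_, ?_, ?_, ?_⟩ <;> rw [G.symm] <;> assumption

theorem exists_nsq_of_nontrivial {V : Type} {G : Trigraph V} {A B : Set V}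
    (h : G.SquareConnected A B) : ∃ a1 a2 b1 b2, G.NSq A B a1 a2 b1 b2 := by
  obtain ⟨hH, h1, h2⟩ := h
  obtain ⟨⟨a, ha⟩, ⟨b, hb⟩, -, -, -, hns, -⟩ := id hH
  by_cases hA : A.Nontrivial
  · exact ⟨a, two_of_meets hH h1 hA a ha⟩
  by_cases hB : B.Nontrivial
  · rw [Set.union_comm A B] at h2
    obtain ⟨c, d, e, hq⟩ := two_of_meets hH.swap h2 hB b hb
    exact ⟨_, _, _, _, hq.transpose⟩
  · rw [Set.not_nontrivial_iff] at hA hB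
    exact absurd ⟨a, b, hA.eq_singleton_of_mem ha, hB.eq_singleton_of_mem hb⟩ hns

theorem SquareConnected.deletionMinimal {V : Type} {G : Trigraph V} {A B : Set V}
    (h : G.SquareConnected A B) : G.DeletionMinimal A B := by
  obtain ⟨a1, a2, b1, b2, hn⟩ := exists_nsq_of_nontrivial h
  obtain ⟨hH, h1, h2⟩ := h
  obtain ⟨-, -, hd, hA, hB, -, -⟩ := id hH
  rw [Set.union_comm A B] at h2
  obtain ⟨p, q, r, s, na, nb, -⟩ := id hn
  refine ⟨hH, ⟨a1, a2, b2, b1, hn.isSquare hd hA hB, ?_⟩, ?_, ?_⟩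
  · rintro z (rfl | rfl | rfl | rfl)
    exacts [Or.inl p, Or.inl q, Or.inr s, Or.inr r]
  · intro a ha
    obtain ⟨_, _, _, hq⟩ := two_of_meets hH h1 ⟨a1, p, a2, q, na⟩ a ha
    exact hq.not_homog
  · intro b hb
    obtain ⟨_, _, _, hq⟩ := two_of_meets hH.swap h2 ⟨b1, r, b2, s, nb⟩ b hb
    exact hq.not_homog

end Trigraph

/-- A trigraph contains a square-connected homogeneous pair of strong
cliques if and only if it contains a deletion-minimal homogeneous pair of strong
cliques. -/
theorem squareConnected_iff_deletionMinimal {V : Type} [Fintype V] (G : Trigraph V) :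
    (∃ A B : Set V, G.SquareConnected A B) ↔
      (∃ A B : Set V, G.DeletionMinimal A B) := by
  constructor
  · rintro ⟨A, B, h⟩
    exact ⟨A, B, h.deletionMinimal⟩
  · rintro ⟨A, B, hH, hS, -⟩
    let P : Set (Set V × Set V) := {p | G.HPOSC p.1 p.2 ∧ G.HasSquareIn (p.1 ∪ p.2)}
    obtain ⟨⟨A0, B0⟩, ⟨h1, h2⟩, hmin⟩ := Set.exists_min_image P
      (fun p => (p.1 ∪ p.2).ncard) (Set.toFinite P) ⟨(A, B), hH, hS⟩
    have hm : ∀ A1 B1 : Set V, G.HPOSC A1 B1 → G.HasSquareIn (A1 ∪ B1) →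
        (A0 ∪ B0).ncard ≤ (A1 ∪ B1).ncard := fun A1 B1 p q => hmin (A1, B1) ⟨p, q⟩
    refine ⟨A0, B0, h1, Trigraph.connected_of_minimal h1 h2 hm, ?_⟩
    have h2' : G.HasSquareIn (A0 ∪ B0) := h2
    rw [Set.union_comm A0 B0] at h2' hm ⊢
    exact Trigraph.connected_of_minimal h1.swap h2' hm
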